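/- arXiv:2407.17103 — 3 statements merged into one kernel-verified Lean document; each statement's English description precedes it below -/
import Mathlib

section
/- Let x, y ∈ ℂⁿ be orthogonal unit vectors and let Φ be a quantum channel on n×n complex matrices. If there exists λ̂ ∈ (0,1) such that Φ ∘ Ψ_{λ̂,x,y}^{-1} is completely positive, then Φ ∘ Ψ_{λ,x,y}^{-1} is completely positive for every λ ∈ [0, λ̂]. -/
open Matrix Kronecker
open scoped ComplexOrder

noncomputable section

/-- The linear map `ρ ↦ A ρ Bᴴ`. -/
def sandwich₂ {m n : ℕ} (A B : Matrix (Fin m) (Fin n) ℂ) :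
    Matrix (Fin n) (Fin n) ℂ →ₗ[ℂ] Matrix (Fin m) (Fin m) ℂ where
  toFun ρ := A * ρ * Bᴴ
  map_add' X Y := by simp [Matrix.mul_add, Matrix.add_mul]
  map_smul' c X := by simp [Matrix.mul_smul, Matrix.smul_mul]

/-- The linear map `ρ ↦ A ρ Aᴴ`. -/
def sandwich {m n : ℕ} (A : Matrix (Fin m) (Fin n) ℂ) :
    Matrix (Fin n) (Fin n) ℂ →ₗ[ℂ] Matrix (Fin m) (Fin m) ℂ :=
  sandwich₂ A A

/-- The Choi matrix `C(Φ) = ∑ⱼₖ Eⱼₖ ⊗ Φ(Eⱼₖ)`. -/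
def Choi {n m : ℕ} (Φ : Matrix (Fin n) (Fin n) ℂ →ₗ[ℂ] Matrix (Fin m) (Fin m) ℂ) :
    Matrix (Fin n × Fin m) (Fin n × Fin m) ℂ :=
  ∑ j : Fin n, ∑ k : Fin n,
    (Matrix.single j k (1 : ℂ)) ⊗ₖ Φ (Matrix.single j k (1 : ℂ))

/-- Vectorization: `vec X = ∑ⱼ eⱼ ⊗ X eⱼ`, i.e. `(vec X) (j, i) = X i j`. -/
def vec {m n : ℕ} (X : Matrix (Fin m) (Fin n) ℂ) : Fin n × Fin m → ℂ :=
  fun p => X p.2 p.1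

/-- Complete positivity (via the Choi characterization). -/
def IsCP {n : ℕ} (Φ : Matrix (Fin n) (Fin n) ℂ →ₗ[ℂ] Matrix (Fin n) (Fin n) ℂ) : Prop :=
  (Choi Φ).PosSemidef

/-- Trace preservation. -/
def IsTP {n : ℕ} (Φ : Matrix (Fin n) (Fin n) ℂ →ₗ[ℂ] Matrix (Fin n) (Fin n) ℂ) : Prop :=
  ∀ ρ, (Φ ρ).trace = ρ.trace

/-- Quantum channel: completely positive and trace preserving. -/
def IsChannel {n : ℕ} (Φ : Matrix (Fin n) (Fin n) ℂ →ₗ[ℂ] Matrix (Fin n) (Fin n) ℂ) : Prop :=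
  IsCP Φ ∧ IsTP Φ

/-- `K_λ = 1 - (1 - √(1-λ)) x x†`. -/
def Kmat {n : ℕ} (lam : ℝ) (x : Fin n → ℂ) : Matrix (Fin n) (Fin n) ℂ :=
  1 - ((1 - Real.sqrt (1 - lam) : ℝ) : ℂ) • Matrix.vecMulVec x (star x)

/-- `L_λ = √λ y x†`. -/
def Lmat {n : ℕ} (lam : ℝ) (x y : Fin n → ℂ) : Matrix (Fin n) (Fin n) ℂ :=
  ((Real.sqrt lam : ℝ) : ℂ) • Matrix.vecMulVec y (star x)

/-- The elementary channel `Ψ_{λ,x,y} = K_λ (·) K_λ† + L_λ (·) L_λ†`. -/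
def Psi {n : ℕ} (lam : ℝ) (x y : Fin n → ℂ) :
    Matrix (Fin n) (Fin n) ℂ →ₗ[ℂ] Matrix (Fin n) (Fin n) ℂ :=
  sandwich (Kmat lam x) + sandwich (Lmat lam x y)

/-- For `λ ∈ [0,1)` and `⟨x,y⟩ = 0`, the inverse of `Ψ_{λ,x,y}`:
`Ψ_{λ,x,y}⁻¹ = K_λ⁻¹ (·) K_λ⁻¹ - (1-λ)⁻¹ L_λ (·) L_λ†`. -/
def PsiInv {n : ℕ} (lam : ℝ) (x y : Fin n → ℂ) :
    Matrix (Fin n) (Fin n) ℂ →ₗ[ℂ] Matrix (Fin n) (Fin n) ℂ :=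
  sandwich (Kmat lam x)⁻¹ - (((1 - lam)⁻¹ : ℝ) : ℂ) • sandwich (Lmat lam x y)

/-- `Φ` is conjugation by a unitary. -/
def IsUnitaryConj {n : ℕ} (Φ : Matrix (Fin n) (Fin n) ℂ →ₗ[ℂ] Matrix (Fin n) (Fin n) ℂ) : Prop :=
  ∃ U ∈ Matrix.unitaryGroup (Fin n) ℂ, ∀ ρ, Φ ρ = U * ρ * Uᴴ

/-- A quantum channel is divisible if it factors into two channels neither of which is
a unitary conjugation. -/
def Divisible {n : ℕ} (Φ : Matrix (Fin n) (Fin n) ℂ →ₗ[ℂ] Matrix (Fin n) (Fin n) ℂ) : Prop :=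
  ∃ Φ₁ Φ₂ : Matrix (Fin n) (Fin n) ℂ →ₗ[ℂ] Matrix (Fin n) (Fin n) ℂ,
    IsChannel Φ₁ ∧ IsChannel Φ₂ ∧ Φ = Φ₁ ∘ₗ Φ₂ ∧ ¬ IsUnitaryConj Φ₁ ∧ ¬ IsUnitaryConj Φ₂

/-- `Z = conj(x) conj(x⊥)† ⊗ 1`. -/
def Zmat {n : ℕ} (x xp : Fin n → ℂ) : Matrix (Fin n × Fin n) (Fin n × Fin n) ℂ :=
  (Matrix.vecMulVec (star x) xp) ⊗ₖ (1 : Matrix (Fin n) (Fin n) ℂ)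

theorem sandwich_apply {m n : ℕ} (A : Matrix (Fin m) (Fin n) ℂ) (ρ : Matrix (Fin n) (Fin n) ℂ) :
    sandwich A ρ = A * ρ * Aᴴ := rfl

theorem sandwich_comp {l m n : ℕ} (A : Matrix (Fin l) (Fin m) ℂ) (B : Matrix (Fin m) (Fin n) ℂ) :
    sandwich A ∘ₗ sandwich B = sandwich (A * B) := by
  ext1 ρ
  simp [sandwich_apply, Matrix.mul_assoc]

theorem sandwich_smul {m n : ℕ} (c : ℂ) (A : Matrix (Fin m) (Fin n) ℂ) :
    sandwich (c • A) = (c * star c) • sandwich A := by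
  ext1 ρ
  simp [sandwich_apply, smul_smul, mul_comm]

theorem sandwich_zero {m n : ℕ} : sandwich (0 : Matrix (Fin m) (Fin n) ℂ) = 0 := by
  ext1 ρ
  simp [sandwich_apply]

theorem Choi_apply {n m : ℕ} (Φ : Matrix (Fin n) (Fin n) ℂ →ₗ[ℂ] Matrix (Fin m) (Fin m) ℂ)
    (j k : Fin n) (a b : Fin m) :
    Choi Φ (j, a) (k, b) = Φ (Matrix.single j k 1) a b := by
  simp [Choi, Matrix.sum_apply, Matrix.kroneckerMap_apply, Matrix.single_apply, ite_and]

theorem Choi_add {n m : ℕ} (Φ Θ : Matrix (Fin n) (Fin n) ℂ →ₗ[ℂ] Matrix (Fin m) (Fin m) ℂ) :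
    Choi (Φ + Θ) = Choi Φ + Choi Θ := by
  ext ⟨j, a⟩ ⟨k, b⟩
  simp [Choi_apply]

/-- Precomposition with `A (·) Aᴴ` acts on Choi matrices as a congruence by `Aᵀ ⊗ 1`. -/
theorem Choi_comp_sandwich {l n m : ℕ}
    (Θ : Matrix (Fin n) (Fin n) ℂ →ₗ[ℂ] Matrix (Fin m) (Fin m) ℂ)
    (A : Matrix (Fin n) (Fin l) ℂ) :
    Choi (Θ ∘ₗ sandwich A) =
      (Aᵀ ⊗ₖ (1 : Matrix (Fin m) (Fin m) ℂ)) * Choi Θ *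
        (Aᵀ ⊗ₖ (1 : Matrix (Fin m) (Fin m) ℂ))ᴴ := by
  ext ⟨j, a⟩ ⟨k, b⟩
  have expand : sandwich A (Matrix.single j k 1) =
      ∑ p, ∑ q, (A p j * star (A q k)) • Matrix.single p q (1 : ℂ) := by
    rw [Matrix.matrix_eq_sum_single (sandwich A (Matrix.single j k 1))]
    refine Finset.sum_congr rfl fun p _ => Finset.sum_congr rfl fun q _ => ?_
    simp [sandwich_apply, Matrix.mul_apply, Matrix.single_apply, ite_and]
  rw [Choi_apply, LinearMap.comp_apply, expand]
  simp only [map_sum, map_smul, Matrix.sum_apply, Matrix.smul_apply, Matrix.mul_apply,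
    Fintype.sum_prod_type, Matrix.kroneckerMap_apply, Matrix.conjTranspose_apply, Choi_apply,
    Matrix.transpose_apply, Matrix.one_apply, smul_eq_mul]
  simp only [mul_ite, mul_one, mul_zero, ite_mul, zero_mul, Finset.sum_ite_eq, Finset.mem_univ,
    if_true, apply_ite star, star_zero, Finset.sum_mul]
  rw [Finset.sum_comm]
  exact Finset.sum_congr rfl fun p _ => Finset.sum_congr rfl fun q _ => by ring

theorem IsCP.add {n : ℕ} {Φ Θ : Matrix (Fin n) (Fin n) ℂ →ₗ[ℂ] Matrix (Fin n) (Fin n) ℂ}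
    (hΦ : IsCP Φ) (hΘ : IsCP Θ) : IsCP (Φ + Θ) := by
  rw [IsCP, Choi_add]
  exact Matrix.PosSemidef.add hΦ hΘ

theorem IsCP.comp_sandwich {n : ℕ} {Θ : Matrix (Fin n) (Fin n) ℂ →ₗ[ℂ] Matrix (Fin n) (Fin n) ℂ}
    (hΘ : IsCP Θ) (A : Matrix (Fin n) (Fin n) ℂ) : IsCP (Θ ∘ₗ sandwich A) := by
  rw [IsCP, Choi_comp_sandwich]
  exact Matrix.PosSemidef.mul_mul_conjTranspose_same hΘ _

theorem IsCP.comp_Psi {n : ℕ} {Θ : Matrix (Fin n) (Fin n) ℂ →ₗ[ℂ] Matrix (Fin n) (Fin n) ℂ}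
    (hΘ : IsCP Θ) (lam : ℝ) (x y : Fin n → ℂ) : IsCP (Θ ∘ₗ Psi lam x y) := by
  rw [Psi, LinearMap.comp_add]
  exact (hΘ.comp_sandwich _).add (hΘ.comp_sandwich _)

/-- `1 - (1 - s) x x†`: for a unit vector `x`, this scales `x` by `s` and fixes its orthogonal
complement. -/
def scaleAlong {n : ℕ} (s : ℝ) (x : Fin n → ℂ) : Matrix (Fin n) (Fin n) ℂ :=
  1 - ((1 - s : ℝ) : ℂ) • Matrix.vecMulVec x (star x)

theorem Kmat_eq_scaleAlong {n : ℕ} (lam : ℝ) (x : Fin n → ℂ) :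
    Kmat lam x = scaleAlong (Real.sqrt (1 - lam)) x := rfl

theorem scaleAlong_mul_scaleAlong {n : ℕ} {x : Fin n → ℂ} (hx : star x ⬝ᵥ x = 1) (s t : ℝ) :
    scaleAlong s x * scaleAlong t x = scaleAlong (s * t) x := by
  simp only [scaleAlong, Matrix.mul_sub, Matrix.sub_mul, Matrix.mul_one, Matrix.one_mul,
    Matrix.smul_mul, Matrix.mul_smul, Matrix.vecMulVec_mul_vecMulVec, hx, one_smul]
  push_cast
  module

theorem inv_scaleAlong {n : ℕ} {x : Fin n → ℂ} (hx : star x ⬝ᵥ x = 1) {s : ℝ} (hs : s ≠ 0) :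
    (scaleAlong s x)⁻¹ = scaleAlong s⁻¹ x := by
  refine Matrix.inv_eq_right_inv ?_
  rw [scaleAlong_mul_scaleAlong hx, mul_inv_cancel₀ hs]
  simp [scaleAlong]

theorem scaleAlong_mul_vecMulVec {n : ℕ} {x y : Fin n → ℂ} (hxy : star x ⬝ᵥ y = 0) (s : ℝ)
    (z : Fin n → ℂ) :
    scaleAlong s x * Matrix.vecMulVec y z = Matrix.vecMulVec y z := by
  simp [scaleAlong, Matrix.sub_mul, Matrix.vecMulVec_mul_vecMulVec, hxy]

theorem vecMulVec_mul_scaleAlong {n : ℕ} {x : Fin n → ℂ} (hx : star x ⬝ᵥ x = 1) (s : ℝ)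
    (y : Fin n → ℂ) :
    Matrix.vecMulVec y (star x) * scaleAlong s x = (s : ℂ) • Matrix.vecMulVec y (star x) := by
  simp only [scaleAlong, Matrix.mul_sub, Matrix.mul_one, Matrix.mul_smul,
    Matrix.vecMulVec_mul_vecMulVec, hx, one_smul]
  push_cast
  module

theorem sandwich_Lmat {n : ℕ} {lam : ℝ} (h : 0 ≤ lam) (x y : Fin n → ℂ) :
    sandwich (Lmat lam x y) = (lam : ℂ) • sandwich (Matrix.vecMulVec y (star x)) := by
  rw [Lmat, sandwich_smul, Complex.star_def, Complex.conj_ofReal, ← Complex.ofReal_mul,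
    Real.mul_self_sqrt h]

/-- The maps `Ψ_{λ,x,y}` multiply according to `1 - λ`, expressed through the inverses. -/
theorem PsiInv_comp_Psi {n : ℕ} {x y : Fin n → ℂ} (hx : star x ⬝ᵥ x = 1)
    (hxy : star x ⬝ᵥ y = 0) {lam lamhat : ℝ} (h0 : 0 ≤ lam) (hle : lam ≤ lamhat)
    (h1 : lamhat < 1) :
    PsiInv lamhat x y ∘ₗ Psi (1 - (1 - lamhat) / (1 - lam)) x y = PsiInv lam x y := by
  have hpos : 0 < 1 - lam := by linarith
  have hposhat : 0 < 1 - lamhat := by linarith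
  have hmu : 0 ≤ 1 - (1 - lamhat) / (1 - lam) := by
    rw [sub_nonneg, div_le_one hpos]
    linarith
  have hscale : (Real.sqrt (1 - lamhat))⁻¹ * Real.sqrt ((1 - lamhat) / (1 - lam)) =
      (Real.sqrt (1 - lam))⁻¹ := by
    have := (Real.sqrt_pos.2 hposhat).ne'
    rw [Real.sqrt_div hposhat.le]
    field_simp
  have hsq : ((Real.sqrt ((1 - lamhat) / (1 - lam)) : ℝ) : ℂ) *
      ((Real.sqrt ((1 - lamhat) / (1 - lam)) : ℝ) : ℂ) =
        (((1 - lamhat) / (1 - lam) : ℝ) : ℂ) := by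
    rw [← Complex.ofReal_mul, Real.mul_self_sqrt (by positivity)]
  have hcoef : (1 - (1 - lamhat) / (1 - lam)) -
      (1 - lamhat)⁻¹ * lamhat * ((1 - lamhat) / (1 - lam)) = -((1 - lam)⁻¹ * lam) := by
    field_simp
    ring
  have hcoefC := congrArg Complex.ofReal hcoef
  simp only [PsiInv, Psi, Kmat_eq_scaleAlong, sandwich_Lmat h0, sandwich_Lmat (h0.trans hle),
    sandwich_Lmat hmu, inv_scaleAlong hx (Real.sqrt_pos.2 hpos).ne',
    inv_scaleAlong hx (Real.sqrt_pos.2 hposhat).ne', sub_sub_cancel,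
    LinearMap.comp_add, LinearMap.sub_comp, LinearMap.smul_comp, LinearMap.comp_smul,
    sandwich_comp, scaleAlong_mul_scaleAlong hx, scaleAlong_mul_vecMulVec hxy,
    vecMulVec_mul_scaleAlong hx, Matrix.vecMulVec_mul_vecMulVec, hxy, hscale, sandwich_smul,
    Complex.star_def, Complex.conj_ofReal, hsq, zero_smul, Matrix.vecMulVec_zero,
    sandwich_zero, smul_zero, sub_zero]
  push_cast at hcoefC ⊢
  linear_combination (norm := module) hcoefC • sandwich (Matrix.vecMulVec y (star x))

/-- if `Φ ∘ Ψ_{λ̂}⁻¹` is CP for some `λ̂ ∈ (0,1)`, then `Φ ∘ Ψ_λ⁻¹` is CP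
for all `λ ∈ [0, λ̂]`. -/
theorem cp_of_cp_le (n : ℕ) (x y : Fin n → ℂ)
    (hx : star x ⬝ᵥ x = 1) (hy : star y ⬝ᵥ y = 1) (hxy : star x ⬝ᵥ y = 0)
    (Φ : Matrix (Fin n) (Fin n) ℂ →ₗ[ℂ] Matrix (Fin n) (Fin n) ℂ) (hΦ : IsChannel Φ)
    (lamhat : ℝ) (hlamhat : lamhat ∈ Set.Ioo (0 : ℝ) 1)
    (hCP : IsCP (Φ ∘ₗ PsiInv lamhat x y)) :
    ∀ lam ∈ Set.Icc (0 : ℝ) lamhat, IsCP (Φ ∘ₗ PsiInv lam x y) := by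
  intro lam hlam
  rw [← PsiInv_comp_Psi hx hxy hlam.1 hlam.2 hlamhat.2, ← LinearMap.comp_assoc]
  exact hCP.comp_Psi _ x y

end
end

section
/- Let Φ be a quantum channel on n×n complex matrices with Kraus operators {K_j}, and let x, x⊥ ∈ ℂⁿ be orthogonal unit vectors. If Φ ∘ Ψ_{λ,x,x⊥}^{-1} is completely positive for some λ ∈ (0,1), then Φ(x⊥ x⊥†) Z x = 0 for every n×n matrix Z in the Hilbert–Schmidt orthogonal complement K_Φ^⊥ of span{K_j}. -/
open Matrix Kronecker
open scoped ComplexOrder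

noncomputable section

/-- The quadratic form of the Choi matrix of `Φ` at the vectorization of `W`. -/
def choiForm {n : ℕ} (W : Matrix (Fin n) (Fin n) ℂ) :
    (Matrix (Fin n) (Fin n) ℂ →ₗ[ℂ] Matrix (Fin n) (Fin n) ℂ) →ₗ[ℂ] ℂ where
  toFun Φ := star (_root_.vec W) ⬝ᵥ (Choi Φ *ᵥ _root_.vec W)
  map_add' Φ Ψ := by
    have h : Choi (Φ + Ψ) = Choi Φ + Choi Ψ := by
      simp [Choi, Matrix.kronecker_add, Finset.sum_add_distrib]
    rw [h, Matrix.add_mulVec, dotProduct_add]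
  map_smul' c Φ := by
    have h : Choi (c • Φ) = c • Choi Φ := by
      simp [Choi, Matrix.kronecker_smul, Finset.smul_sum]
    rw [h, Matrix.smul_mulVec, dotProduct_smul, RingHom.id_apply]

lemma choi_apply {n m : ℕ} (Φ : Matrix (Fin n) (Fin n) ℂ →ₗ[ℂ] Matrix (Fin m) (Fin m) ℂ)
    (p q : Fin n × Fin m) :
    Choi Φ p q = Φ (Matrix.single p.1 q.1 1) p.2 q.2 := by
  simp [Choi, Matrix.sum_apply, Matrix.kroneckerMap_apply, Matrix.single_apply, ite_and]

lemma choi_sandwich {m n : ℕ} (A : Matrix (Fin m) (Fin n) ℂ) :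
    Choi (sandwich A) = Matrix.vecMulVec (_root_.vec A) (star (_root_.vec A)) := by
  ext p q
  rw [choi_apply]
  simp [sandwich, sandwich₂, _root_.vec, Matrix.vecMulVec_apply, Matrix.mul_apply,
    Matrix.single_apply, ite_and]

lemma star_vec_dotProduct_vec {m n : ℕ} (A W : Matrix (Fin m) (Fin n) ℂ) :
    star (_root_.vec A) ⬝ᵥ _root_.vec W = (Aᴴ * W).trace := by
  simp [dotProduct, _root_.vec, Matrix.trace, Matrix.mul_apply, Fintype.sum_prod_type]

lemma choiForm_sandwich {n : ℕ} (A W : Matrix (Fin n) (Fin n) ℂ) :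
    choiForm W (sandwich A) = (Complex.normSq (Aᴴ * W).trace : ℂ) := by
  change star (_root_.vec W) ⬝ᵥ (Choi (sandwich A) *ᵥ _root_.vec W) = _
  rw [choi_sandwich, Matrix.vecMulVec_mulVec, star_vec_dotProduct_vec, op_smul_eq_smul,
    dotProduct_smul, smul_eq_mul, ← Complex.mul_conj, ← star_vec_dotProduct_vec,
    starRingEnd_apply, star_dotProduct, star_star]

lemma conjTranspose_Kmat {n : ℕ} (lam : ℝ) (x : Fin n → ℂ) :
    (Kmat lam x)ᴴ = Kmat lam x := by
  simp [Kmat, Matrix.conjTranspose_sub, Matrix.conjTranspose_smul,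
    Matrix.conjTranspose_vecMulVec]

lemma Kmat_mulVec_self {n : ℕ} (lam : ℝ) {x : Fin n → ℂ} (hx : star x ⬝ᵥ x = 1) :
    Kmat lam x *ᵥ x = (Real.sqrt (1 - lam) : ℂ) • x := by
  simp [Kmat, Matrix.sub_mulVec, Matrix.smul_mulVec, Matrix.vecMulVec_mulVec, hx, sub_smul]

lemma Kmat_mul_inv {n : ℕ} {lam : ℝ} (hlam : lam < 1) {x : Fin n → ℂ}
    (hx : star x ⬝ᵥ x = 1) : Kmat lam x * (Kmat lam x)⁻¹ = 1 := by
  have hs : (Real.sqrt (1 - lam) : ℂ) ≠ 0 := by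
    exact_mod_cast (Real.sqrt_pos.2 (sub_pos.2 hlam)).ne'
  have hP : Matrix.vecMulVec x (star x) * Matrix.vecMulVec x (star x)
      = Matrix.vecMulVec x (star x) := by
    rw [Matrix.vecMulVec_mul_vecMulVec, hx, one_smul]
  have h : Kmat lam x *
      (1 + ((Real.sqrt (1 - lam) : ℂ)⁻¹ - 1) • Matrix.vecMulVec x (star x)) = 1 := by
    simp only [Kmat, sub_mul, mul_add, one_mul, mul_one, smul_mul_assoc, mul_smul_comm, hP]
    push_cast
    match_scalars <;> field_simp
    ring
  rw [Matrix.inv_eq_right_inv h, h]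

/-- Positivity of the Choi matrix of `∑ⱼ Aⱼ · Aⱼᴴ - c ∑ⱼ Bⱼ · Bⱼᴴ` with `c > 0` forces everything
orthogonal to all the `Aⱼ` to be orthogonal to all the `Bⱼ`. -/
lemma trace_eq_zero_of_isCP_sub {n r : ℕ} (A B : Fin r → Matrix (Fin n) (Fin n) ℂ) {c : ℝ}
    (hc : 0 < c) (hCP : IsCP (∑ j, sandwich (A j) - (c : ℂ) • ∑ j, sandwich (B j)))
    {W : Matrix (Fin n) (Fin n) ℂ} (hW : ∀ j, ((A j)ᴴ * W).trace = 0) (j : Fin r) :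
    ((B j)ᴴ * W).trace = 0 := by
  have h : 0 ≤ choiForm W (∑ j, sandwich (A j) - (c : ℂ) • ∑ j, sandwich (B j)) :=
    hCP.dotProduct_mulVec_nonneg _
  simp only [map_sub, map_smul, map_sum, choiForm_sandwich, hW, map_zero, Complex.ofReal_zero,
    Finset.sum_const_zero, zero_sub, smul_eq_mul] at h
  have h' : 0 ≤ -(c * ∑ j, Complex.normSq ((B j)ᴴ * W).trace) := by exact_mod_cast h
  have hnn : ∀ i ∈ Finset.univ, 0 ≤ Complex.normSq ((B i)ᴴ * W).trace :=
    fun i _ => Complex.normSq_nonneg _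
  have hsum : ∑ j, Complex.normSq ((B j)ᴴ * W).trace = 0 :=
    le_antisymm (by nlinarith) (Finset.sum_nonneg hnn)
  exact Complex.normSq_eq_zero.1 ((Finset.sum_eq_zero_iff_of_nonneg hnn).1 hsum j
    (Finset.mem_univ j))

lemma comp_PsiInv_eq {n r : ℕ} {K : Fin r → Matrix (Fin n) (Fin n) ℂ}
    {Φ : Matrix (Fin n) (Fin n) ℂ →ₗ[ℂ] Matrix (Fin n) (Fin n) ℂ}
    (hKraus : ∀ ρ, Φ ρ = ∑ j, K j * ρ * (K j)ᴴ) (lam : ℝ) (x y : Fin n → ℂ) :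
    Φ ∘ₗ PsiInv lam x y = ∑ j, sandwich (K j * (Kmat lam x)⁻¹) -
      (((1 - lam)⁻¹ : ℝ) : ℂ) • ∑ j, sandwich (K j * Lmat lam x y) := by
  refine LinearMap.ext fun ρ => ?_
  simp only [LinearMap.comp_apply, PsiInv, LinearMap.sub_apply, LinearMap.smul_apply,
    LinearMap.sum_apply, map_sub, map_smul]
  simp only [hKraus]
  simp only [sandwich, sandwich₂, LinearMap.coe_mk, AddHom.coe_mk, Matrix.conjTranspose_mul,
    Matrix.mul_assoc]

/-- necessary criterion. If `Φ ∘ Ψ_λ⁻¹` is CP for some `λ ∈ (0,1)`, then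
`Φ(x⊥ x⊥†) Z x = 0` for all `Z ∈ K_Φ^⊥`. -/
theorem necessary_criterion (n r : ℕ) (K : Fin r → Matrix (Fin n) (Fin n) ℂ)
    (Φ : Matrix (Fin n) (Fin n) ℂ →ₗ[ℂ] Matrix (Fin n) (Fin n) ℂ)
    (hKraus : ∀ ρ, Φ ρ = ∑ j, K j * ρ * (K j)ᴴ) (hΦ : IsChannel Φ)
    (x xp : Fin n → ℂ)
    (hx : star x ⬝ᵥ x = 1) (hxp : star xp ⬝ᵥ xp = 1) (horth : star x ⬝ᵥ xp = 0)
    (lam : ℝ) (hlam : lam ∈ Set.Ioo (0 : ℝ) 1)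
    (hCP : IsCP (Φ ∘ₗ PsiInv lam x xp)) :
    ∀ Z : Matrix (Fin n) (Fin n) ℂ, (∀ j, ((K j)ᴴ * Z).trace = 0) →
      (Φ (Matrix.vecMulVec xp (star xp)) * Z) *ᵥ x = 0 := by
  intro Z hZ
  have hs : (Real.sqrt (1 - lam) : ℂ) ≠ 0 := by
    exact_mod_cast (Real.sqrt_pos.2 (sub_pos.2 hlam.2)).ne'
  have hl : (Real.sqrt lam : ℂ) ≠ 0 := by
    exact_mod_cast (Real.sqrt_pos.2 hlam.1).ne'
  rw [comp_PsiInv_eq hKraus] at hCP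
  have hW : ∀ j, ((K j * (Kmat lam x)⁻¹)ᴴ * (Z * Kmat lam x)).trace = 0 := fun j => by
    rw [Matrix.conjTranspose_mul, Matrix.conjTranspose_nonsing_inv, conjTranspose_Kmat,
      ← Matrix.mul_assoc, Matrix.trace_mul_comm, ← Matrix.mul_assoc, ← Matrix.mul_assoc,
      Kmat_mul_inv hlam.2 hx, Matrix.one_mul, hZ]
  have hcoef : ∀ j, star xp ⬝ᵥ ((K j)ᴴ *ᵥ (Z *ᵥ x)) = 0 := fun j => by
    have h := trace_eq_zero_of_isCP_sub _ _ (inv_pos.2 (sub_pos.2 hlam.2)) hCP hW j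
    rw [Lmat, Matrix.mul_smul, Matrix.conjTranspose_smul, Matrix.conjTranspose_mul,
      Matrix.conjTranspose_vecMulVec, star_star, Matrix.smul_mul, Matrix.trace_smul,
      Matrix.mul_assoc, Matrix.vecMulVec_mul, Matrix.trace_vecMulVec, dotProduct_comm,
      ← Matrix.dotProduct_mulVec, ← Matrix.mulVec_mulVec, ← Matrix.mulVec_mulVec,
      Kmat_mulVec_self lam hx, Matrix.mulVec_smul, Matrix.mulVec_smul, dotProduct_smul] at h
    simpa [hs, hl] using h
  rw [hKraus, ← Matrix.mulVec_mulVec, Matrix.sum_mulVec]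
  refine Finset.sum_eq_zero fun j _ => ?_
  rw [← Matrix.mulVec_mulVec, ← Matrix.mulVec_mulVec, Matrix.vecMulVec_mulVec, hcoef]
  simp

end
end

section
/- Let Φ be a quantum channel on 3×3 complex matrices whose Choi matrix C(Φ) has diagonal (0, a, 1−a, b, 0, 1−b, c, 1−c, 0) for some a, b, c ∈ (0,1); equivalently, the diagonal of Φ(E_00) is (0, a, 1−a), the diagonal of Φ(E_11) is (b, 0, 1−b), and the diagonal of Φ(E_22) is (c, 1−c, 0). Then for every λ ∈ (0,1) and all orthogonal unit vectors x, x⊥ ∈ ℂ³, the map Φ ∘ Ψ_{λ,x,x⊥}^{-1} is not completely positive. -/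
open Matrix Kronecker
open scoped ComplexOrder

noncomputable section

lemma choi_apply_s19 {n m : ℕ} (Φ : Matrix (Fin n) (Fin n) ℂ →ₗ[ℂ] Matrix (Fin m) (Fin m) ℂ)
    (j k : Fin n) (l r : Fin m) :
    Choi Φ (j, l) (k, r) = Φ (Matrix.single j k (1 : ℂ)) l r := by
  simp only [Choi, Matrix.sum_apply, Matrix.kroneckerMap_apply]
  rw [Finset.sum_eq_single j, Finset.sum_eq_single k]
  · simp
  · intro k' _ hk
    simp [hk]
  · simp
  · intro j' _ hj
    simp [hj]
  · simp

lemma map_vecMulVec_apply {n m : ℕ}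
    (Φ : Matrix (Fin n) (Fin n) ℂ →ₗ[ℂ] Matrix (Fin m) (Fin m) ℂ) (v w : Fin n → ℂ)
    (l r : Fin m) :
    Φ (Matrix.vecMulVec v w) l r =
      ∑ j, ∑ k, v j * w k * Φ (Matrix.single j k (1 : ℂ)) l r := by
  conv_lhs => rw [Matrix.matrix_eq_sum_single (Matrix.vecMulVec v w)]
  simp only [map_sum, Matrix.sum_apply, Matrix.vecMulVec_apply]
  refine Finset.sum_congr rfl fun j _ => Finset.sum_congr rfl fun k _ => ?_
  rw [← smul_eq_mul (v j * w k), ← Matrix.smul_apply, ← map_smul, Matrix.smul_single,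
    smul_eq_mul, mul_one]

/-- A completely positive map sends `v v†` to a matrix with nonnegative diagonal. -/
lemma IsCP.map_vecMulVec_apply_nonneg {n : ℕ}
    {Φ : Matrix (Fin n) (Fin n) ℂ →ₗ[ℂ] Matrix (Fin n) (Fin n) ℂ} (h : IsCP Φ)
    (v : Fin n → ℂ) (i : Fin n) : 0 ≤ Φ (Matrix.vecMulVec v (star v)) i i := by
  have key := h.dotProduct_mulVec_nonneg (fun p => if p.2 = i then star (v p.1) else 0)
  rw [map_vecMulVec_apply]
  convert key using 1
  simp only [dotProduct, Matrix.mulVec, Fintype.sum_prod_type, choi_apply_s19, Pi.star_apply,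
    apply_ite star, star_star, star_zero, mul_ite, ite_mul, mul_zero, zero_mul,
    Finset.sum_ite_eq', Finset.mem_univ, if_true]
  refine Finset.sum_congr rfl fun j _ => ?_
  rw [Finset.mul_sum]
  exact Finset.sum_congr rfl fun k _ => by ring

/-- A vanishing diagonal entry of the Choi matrix forces its row to vanish. -/
lemma IsCP.map_single_apply_eq_zero {n : ℕ}
    {Φ : Matrix (Fin n) (Fin n) ℂ →ₗ[ℂ] Matrix (Fin n) (Fin n) ℂ} (h : IsCP Φ)
    {j l : Fin n} (hz : Φ (Matrix.single j j (1 : ℂ)) l l = 0) (k r : Fin n) :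
    Φ (Matrix.single j k (1 : ℂ)) l r = 0 ∧ Φ (Matrix.single k j (1 : ℂ)) r l = 0 := by
  have h0 := (h.dotProduct_mulVec_zero_iff (Pi.single (j, l) 1)).1 (by
    simp [choi_apply_s19, hz])
  have h1 : Φ (Matrix.single k j (1 : ℂ)) r l = 0 := by
    simpa [choi_apply_s19] using congrFun h0 (k, r)
  refine ⟨?_, h1⟩
  have h2 := h.1.apply (j, l) (k, r)
  rw [choi_apply_s19, choi_apply_s19, h1, star_zero] at h2
  exact h2.symm

/-- If a qutrit channel has `Φ(Eᵢᵢ)ᵢᵢ = 0` for all `i`, the diagonal of `Φ(ρ)` depends only on the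
diagonal of `ρ`. -/
lemma IsChannel.map_vecMulVec_apply_diag
    {Φ : Matrix (Fin 3) (Fin 3) ℂ →ₗ[ℂ] Matrix (Fin 3) (Fin 3) ℂ} (h : IsChannel Φ)
    (hz : ∀ i, Φ (Matrix.single i i (1 : ℂ)) i i = 0) (v : Fin 3 → ℂ) (i : Fin 3) :
    Φ (Matrix.vecMulVec v (star v)) i i =
      ∑ j, (Complex.normSq (v j) : ℂ) * Φ (Matrix.single j j (1 : ℂ)) i i := by
  have off : ∀ j k, j ≠ k → Φ (Matrix.single j k (1 : ℂ)) i i = 0 := by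
    intro j k hjk
    have hj := (h.1.map_single_apply_eq_zero (hz j) k j).1
    have hk := (h.1.map_single_apply_eq_zero (hz k) j k).2
    by_cases hij : i = j
    · rw [hij, hj]
    by_cases hik : i = k
    · rw [hik, hk]
    have ht := h.2 (Matrix.single j k (1 : ℂ))
    rw [Matrix.trace_single_eq_of_ne _ _ _ hjk, Matrix.trace,
      Finset.sum_eq_single_of_mem i (Finset.mem_univ i)] at ht
    · exact ht
    · intro l _ hl
      have : l = j ∨ l = k := by omega
      rcases this with rfl | rfl
      · exact hj
      · exact hk
  rw [map_vecMulVec_apply]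
  refine Finset.sum_congr rfl fun j _ => ?_
  rw [Finset.sum_eq_single_of_mem j (Finset.mem_univ j), Pi.star_apply, Complex.star_def,
    Complex.mul_conj]
  intro k _ hk
  rw [off j k hk.symm, mul_zero]

lemma sandwich_vecMulVec {m n : ℕ} (A : Matrix (Fin m) (Fin n) ℂ) (v : Fin n → ℂ) :
    sandwich A (Matrix.vecMulVec v (star v)) =
      Matrix.vecMulVec (A *ᵥ v) (star (A *ᵥ v)) := by
  change A * Matrix.vecMulVec v (star v) * Aᴴ = _
  rw [Matrix.mul_vecMulVec, Matrix.vecMulVec_mul, Matrix.star_mulVec]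

lemma Kmat_mulVec {n : ℕ} (lam : ℝ) (x w : Fin n → ℂ) :
    Kmat lam x *ᵥ w = w - (((1 - Real.sqrt (1 - lam) : ℝ) : ℂ) * (star x ⬝ᵥ w)) • x := by
  rw [Kmat, Matrix.sub_mulVec, Matrix.one_mulVec, Matrix.smul_mulVec, Matrix.vecMulVec_mulVec,
    op_smul_eq_smul, smul_smul]

lemma isUnit_det_Kmat {n : ℕ} {lam : ℝ} (hl : lam < 1) {x : Fin n → ℂ}
    (hx : star x ⬝ᵥ x = 1) : IsUnit (Kmat lam x).det := by
  have hs : ((Real.sqrt (1 - lam) : ℝ) : ℂ) ≠ 0 := by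
    exact_mod_cast (Real.sqrt_pos.2 (sub_pos.2 hl)).ne'
  refine Matrix.isUnit_det_of_right_inverse
    (B := 1 + ((Real.sqrt (1 - lam) : ℂ)⁻¹ - 1) • Matrix.vecMulVec x (star x)) ?_
  have hp : Matrix.vecMulVec x (star x) * Matrix.vecMulVec x (star x) =
      Matrix.vecMulVec x (star x) := by
    rw [Matrix.vecMulVec_mul_vecMulVec, hx, one_smul]
  rw [Kmat, sub_mul, mul_add, mul_add, one_mul, one_mul, mul_one, smul_mul_smul_comm, hp,
    add_sub_assoc, add_eq_left, ← add_smul, ← sub_smul]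
  convert zero_smul ℂ _ using 2
  push_cast
  field_simp
  ring

/-- `Ψ⁻¹` on the rank-one matrix of `K w` is `w w† - λ |⟨x, w⟩|² y y†`. -/
lemma PsiInv_vecMulVec_Kmat {n : ℕ} {lam : ℝ} (hl0 : 0 ≤ lam) (hl : lam < 1) {x y : Fin n → ℂ}
    (hx : star x ⬝ᵥ x = 1) (w : Fin n → ℂ) :
    PsiInv lam x y (Matrix.vecMulVec (Kmat lam x *ᵥ w) (star (Kmat lam x *ᵥ w))) =
      Matrix.vecMulVec w (star w) -
        ((lam * Complex.normSq (star x ⬝ᵥ w) : ℝ) : ℂ) • Matrix.vecMulVec y (star y) := by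
  have hK : (Kmat lam x)⁻¹ *ᵥ (Kmat lam x *ᵥ w) = w := by
    rw [Matrix.mulVec_mulVec, Matrix.nonsing_inv_mul _ (isUnit_det_Kmat hl hx),
      Matrix.one_mulVec]
  have hL : Lmat lam x y *ᵥ (Kmat lam x *ᵥ w) =
      ((Real.sqrt lam * Real.sqrt (1 - lam) : ℝ) * (star x ⬝ᵥ w)) • y := by
    rw [Lmat, Matrix.smul_mulVec, Matrix.vecMulVec_mulVec, op_smul_eq_smul, smul_smul,
      Kmat_mulVec, dotProduct_sub, dotProduct_smul, hx]
    congr 1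
    push_cast
    simp only [smul_eq_mul]
    ring
  have h1 : (1 - lam) ≠ 0 := (sub_pos.2 hl).ne'
  rw [PsiInv, LinearMap.sub_apply, LinearMap.smul_apply, sandwich_vecMulVec,
    sandwich_vecMulVec, hK, hL, star_smul, Matrix.smul_vecMulVec, Matrix.vecMulVec_smul,
    smul_smul, smul_smul, Complex.star_def, mul_assoc, Complex.mul_conj, ← Complex.ofReal_mul,
    Complex.normSq_mul, Complex.normSq_ofReal]
  congr 3
  have e1 := Real.mul_self_sqrt hl0
  have e2 := Real.mul_self_sqrt (sub_pos.2 hl).le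
  rw [mul_mul_mul_comm, e1, e2]
  field_simp

/-- a qutrit channel whose Choi matrix has diagonal
`(0, a, 1-a, b, 0, 1-b, c, 1-c, 0)` with `a, b, c ∈ (0,1)` admits no division by any
`Ψ_{λ,x,x⊥}`. -/
theorem qutrit_prime_diagonal
    (Φ : Matrix (Fin 3) (Fin 3) ℂ →ₗ[ℂ] Matrix (Fin 3) (Fin 3) ℂ) (hΦ : IsChannel Φ)
    (a b c : ℝ) (ha : a ∈ Set.Ioo (0 : ℝ) 1) (hb : b ∈ Set.Ioo (0 : ℝ) 1)
    (hc : c ∈ Set.Ioo (0 : ℝ) 1)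
    (h00 : Φ (Matrix.single 0 0 (1 : ℂ)) 0 0 = 0)
    (h01 : Φ (Matrix.single 0 0 (1 : ℂ)) 1 1 = (a : ℂ))
    (h02 : Φ (Matrix.single 0 0 (1 : ℂ)) 2 2 = (1 - a : ℝ))
    (h10 : Φ (Matrix.single 1 1 (1 : ℂ)) 0 0 = (b : ℂ))
    (h11 : Φ (Matrix.single 1 1 (1 : ℂ)) 1 1 = 0)
    (h12 : Φ (Matrix.single 1 1 (1 : ℂ)) 2 2 = (1 - b : ℝ))
    (h20 : Φ (Matrix.single 2 2 (1 : ℂ)) 0 0 = (c : ℂ))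
    (h21 : Φ (Matrix.single 2 2 (1 : ℂ)) 1 1 = (1 - c : ℝ))
    (h22 : Φ (Matrix.single 2 2 (1 : ℂ)) 2 2 = 0) :
    ∀ lam ∈ Set.Ioo (0 : ℝ) 1, ∀ x xp : Fin 3 → ℂ,
      star x ⬝ᵥ x = 1 → star xp ⬝ᵥ xp = 1 → star x ⬝ᵥ xp = 0 →
      ¬ IsCP (Φ ∘ₗ PsiInv lam x xp) := by
  intro lam hlam x xp hx hxp hort hCP
  have hz : ∀ i, Φ (Matrix.single i i (1 : ℂ)) i i = 0 := by
    intro i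
    fin_cases i <;> assumption
  obtain ⟨P, hP, hPpos⟩ : ∃ P : Fin 3 → Fin 3 → ℝ,
      (∀ i j, Φ (Matrix.single j j (1 : ℂ)) i i = (P i j : ℂ)) ∧ ∀ i j, i ≠ j → 0 < P i j := by
    refine ⟨!![0, b, c; a, 0, 1 - c; 1 - a, 1 - b, 0], ?_, ?_⟩
    · intro i j
      fin_cases i <;> fin_cases j <;> simp [*]
    · intro i j hij
      fin_cases i <;> fin_cases j <;>
        simp [ha.1, ha.2, hb.1, hb.2, hc.1, hc.2] at hij ⊢
  have hPnn : ∀ i j, 0 ≤ P i j := by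
    intro i j
    by_cases hij : i = j
    · have h := hP i j
      rw [hij, hz] at h
      rw [hij]
      exact_mod_cast h.le
    · exact (hPpos i j hij).le
  have hprod : ∀ i j, i ≠ j → x i ≠ 0 → xp j = 0 := by
    intro i j hij hxi
    have h := hCP.map_vecMulVec_apply_nonneg (Kmat lam x *ᵥ Pi.single i 1) i
    have hi : Matrix.vecMulVec (Pi.single i 1) (star (Pi.single i 1)) =
        Matrix.single i i (1 : ℂ) := by
      rw [← Pi.single_star, star_one, ← Matrix.single_eq_single_vecMulVec_single]
    rw [LinearMap.comp_apply, PsiInv_vecMulVec_Kmat hlam.1.le hlam.2 hx, map_sub, map_smul, hi,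
      Matrix.sub_apply, Matrix.smul_apply, hz, hΦ.map_vecMulVec_apply_diag hz] at h
    simp only [hP, dotProduct_single_one, Pi.star_apply, Complex.star_def, Complex.normSq_conj,
      smul_eq_mul, zero_sub] at h
    norm_cast at h
    have hS := Finset.single_le_sum (f := fun j => Complex.normSq (xp j) * P i j)
      (fun k _ => mul_nonneg (Complex.normSq_nonneg _) (hPnn i k)) (Finset.mem_univ j)
    by_contra hne
    have h1 : 0 < Complex.normSq (xp j) * P i j :=
      mul_pos (Complex.normSq_pos.2 hne) (hPpos i j hij)
    have h2 := mul_pos (mul_pos hlam.1 (Complex.normSq_pos.2 hxi)) (h1.trans_le hS)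
    linarith
  obtain ⟨i, hi⟩ : ∃ i, x i ≠ 0 := by
    by_contra! h
    simp [dotProduct, h] at hx
  have hoff : ∀ j, j ≠ i → xp j = 0 := fun j hj => hprod i j hj.symm hi
  have hxpi : xp i = 0 := by
    rw [dotProduct, Finset.sum_eq_single_of_mem i (Finset.mem_univ i)
      (fun j _ hj => by rw [hoff j hj, mul_zero])] at hort
    simpa [hi] using hort
  have hzero : xp = 0 := by
    funext j
    by_cases hj : j = i
    · rw [hj, hxpi, Pi.zero_apply]
    · rw [hoff j hj, Pi.zero_apply]
  simp [hzero] at hxp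

end
end
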